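/- The product of any 2B+1 consecutive delayed transition matrices is non-expansive with respect to the maximum and minimum over occupied coordinates: for every t ≥ 0 and every realization of the delays, max{ x̂_i(t+2B+1) : i occupied at time t+2B+1 } ≤ max{ x̂_i(t) : i occupied at time t } and min{ x̂_i(t+2B+1) : i occupied at time t+2B+1 } ≥ min{ x̂_i(t) : i occupied at time t }. -/

import Mathlib

open Matrix Filter BigOperators
open scoped Classical

noncomputable section

/-- A directed graph on `Fin n` with `m` directed edges, edge `e` going from
`src e` to `tgt e`. -/
structure DGraph (n m : ℕ) where
  src : Fin m → Fin n
  tgt : Fin m → Fin n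

/-- Hypotheses of the random-delay consensus model: no self-loops, distinct edges,
`P` row stochastic respecting `G` (hence with positive diagonal), and `G` strongly
connected. -/
structure DGraph.Valid {n m : ℕ} (G : DGraph n m) (P : Matrix (Fin n) (Fin n) ℝ) : Prop where
  noSelf : ∀ e, G.src e ≠ G.tgt e
  edgeInj : ∀ e e', G.src e = G.src e' → G.tgt e = G.tgt e' → e = e'
  nonneg : ∀ i j, 0 ≤ P i j
  rowSum : ∀ i, ∑ j, P i j = 1
  support : ∀ i j, 0 < P i j ↔ i = j ∨ ∃ e, G.src e = j ∧ G.tgt e = i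
  connected : ∀ i j : Fin n,
    Relation.ReflTransGen (fun a b => ∃ e, G.src e = a ∧ G.tgt e = b) i j

/-- Delay nodes: for every directed edge `e : Fin m`, every chain-length index
`ℓ : Fin B` (the parallel chain modelling a delay of `ℓ.1 + 1`), and every
position `k : Fin B` with `k ≤ ℓ` along that chain.  There are `m·B(B+1)/2`
of them in total. -/
def DelayNode (m B : ℕ) : Type :=
  {q : Fin m × Fin B × Fin B // q.2.2.1 ≤ q.2.1.1}

instance (m B : ℕ) : Fintype (DelayNode m B) := by
  unfold DelayNode; infer_instance

instance (m B : ℕ) : DecidableEq (DelayNode m B) := by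
  unfold DelayNode; infer_instance

namespace RandomDelay

variable {n m B : ℕ}

/-- The edge a delay node belongs to. -/
def edgeOf (d : DelayNode m B) : Fin m := d.val.1
/-- The chain (of length `lenIdx d + 1`) a delay node belongs to. -/
def lenIdx (d : DelayNode m B) : ℕ := d.val.2.1.1
/-- The (0-indexed) position of a delay node along its chain. -/
def posIdx (d : DelayNode m B) : ℕ := d.val.2.2.1
/-- `d` is the terminal node of its chain. -/
def isTerminal (d : DelayNode m B) : Prop := d.val.2.2 = d.val.2.1

/-- The fixed block-diagonal forward-shift matrix `C`: a message at position `k`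
of a chain moves to position `k+1` of the same chain. -/
def Cmat (m B : ℕ) : Matrix (DelayNode m B) (DelayNode m B) ℝ := fun d d' =>
  if d.val.1 = d'.val.1 ∧ d.val.2.1 = d'.val.2.1 ∧ posIdx d = posIdx d' + 1 then 1 else 0

/-- The fixed delivery matrix `J`: `J i d = 1` iff `d` is the terminal node of a
chain on an edge pointing into compute node `i`. -/
def Jmat (G : DGraph n m) (B : ℕ) : Matrix (Fin n) (DelayNode m B) ℝ := fun i d =>
  if G.tgt (edgeOf d) = i ∧ isTerminal d then 1 else 0

/-- `L(t)`: zero-delay deliveries.  `L t i j = 1` iff at iteration `t` node `j`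
sends its message on the edge `j → i` with zero delay. -/
def Lmat (G : DGraph n m) (del : ℕ → Fin m → Fin (B + 1)) (t : ℕ) :
    Matrix (Fin n) (Fin n) ℝ := fun i j =>
  if ∃ e, G.src e = j ∧ G.tgt e = i ∧ (del t e).1 = 0 then 1 else 0

/-- `R(t)`: routing of messages into delay chains.  `R t d j = 1` iff `d` is the
first node of the chain of length `ℓ+1` on an edge out of `j`, and at iteration
`t` node `j`'s message on that edge is assigned delay `ℓ+1`. -/
def Rmat (G : DGraph n m) (del : ℕ → Fin m → Fin (B + 1)) (t : ℕ) :
    Matrix (DelayNode m B) (Fin n) ℝ := fun d j =>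
  if G.src (edgeOf d) = j ∧ posIdx d = 0 ∧ (del t (edgeOf d)).1 = lenIdx d + 1 then 1 else 0

/-- Occupancy vector: `φ 0 = 0` and `φ t = R(t)·1 + C·φ(t-1)`. -/
def phi (G : DGraph n m) (del : ℕ → Fin m → Fin (B + 1)) : ℕ → DelayNode m B → ℝ
  | 0 => fun _ => 0
  | t + 1 => Rmat G del (t + 1) *ᵥ (fun _ => 1) + Cmat m B *ᵥ phi G del t

/-- `ŵ_{ij}(t)`: the number of delay chains from `j` to `i` whose terminal node is
occupied at time `t - 1`, i.e. the number of delayed messages `i` receives from `j`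
at iteration `t`. -/
def wgt (G : DGraph n m) (del : ℕ → Fin m → Fin (B + 1)) (t : ℕ) (i j : Fin n) : ℕ :=
  (Finset.univ.filter (fun d : DelayNode m B =>
    G.tgt (edgeOf d) = i ∧ G.src (edgeOf d) = j ∧ isTerminal d ∧
      phi G del (t - 1) d = 1)).card

/-- Total number of messages (delayed plus undelayed) that `i` receives from `j`
at iteration `t`, as a real number. -/
def denom (G : DGraph n m) (del : ℕ → Fin m → Fin (B + 1)) (t : ℕ) (i j : Fin n) : ℝ :=
  (wgt G del t i j : ℝ) + Lmat G del t i j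

/-- `P̄[L(t)]`: each entry `1` of `L(t)` (a zero-delay message from `j` to `i`) is
replaced with the weight `P i j / (ŵ_{ij} + L_{ij}(t))`. -/
def PLmat (G : DGraph n m) (P : Matrix (Fin n) (Fin n) ℝ)
    (del : ℕ → Fin m → Fin (B + 1)) (t : ℕ) : Matrix (Fin n) (Fin n) ℝ := fun i j =>
  Lmat G del t i j * (P i j / denom G del t i j)

/-- `P̄[φ(t-1)]`: each entry `1` of `J·diag(φ(t-1))` (a delayed message from `j`
delivered to `i`) is replaced with the weight `P i j / (ŵ_{ij} + L_{ij}(t))`. -/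
def PFmat (G : DGraph n m) (P : Matrix (Fin n) (Fin n) ℝ)
    (del : ℕ → Fin m → Fin (B + 1)) (t : ℕ) : Matrix (Fin n) (DelayNode m B) ℝ := fun i d =>
  Jmat G B i d * phi G del (t - 1) d *
    (P i (G.src (edgeOf d)) / denom G del t i (G.src (edgeOf d)))

/-- Top-left block `P̂₁₁(t) = I − diag(P̄[φ(t−1)]·1_b + P̄[L(t)]·1_n) + P̄[L(t)]`. -/
def P11 (G : DGraph n m) (P : Matrix (Fin n) (Fin n) ℝ)
    (del : ℕ → Fin m → Fin (B + 1)) (t : ℕ) : Matrix (Fin n) (Fin n) ℝ :=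
  1 - Matrix.diagonal (fun i => (∑ d, PFmat G P del t i d) + (∑ j, PLmat G P del t i j))
    + PLmat G P del t

/-- The delayed transition matrix
`P̂(t) = [[P̂₁₁(t), P̄[φ(t−1)]], [R(t), C]]`. -/
def Phat (G : DGraph n m) (P : Matrix (Fin n) (Fin n) ℝ)
    (del : ℕ → Fin m → Fin (B + 1)) (t : ℕ) :
    Matrix (Fin n ⊕ DelayNode m B) (Fin n ⊕ DelayNode m B) ℝ :=
  Matrix.fromBlocks (P11 G P del t) (PFmat G P del t) (Rmat G del t) (Cmat m B)

/-- The state: `x̂(0) = (x(0), 0_b)` and `x̂(t) = P̂(t)·x̂(t−1)`. -/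
def xhat (G : DGraph n m) (P : Matrix (Fin n) (Fin n) ℝ)
    (del : ℕ → Fin m → Fin (B + 1)) (x0 : Fin n → ℝ) :
    ℕ → (Fin n ⊕ DelayNode m B) → ℝ
  | 0 => Sum.elim x0 (fun _ => 0)
  | t + 1 => Phat G P del (t + 1) *ᵥ xhat G P del x0 t

/-- The product `M(t) = P̂(t)·P̂(t−1)⋯P̂(1)` (with `M(0) = I`). -/
def Mprod (G : DGraph n m) (P : Matrix (Fin n) (Fin n) ℝ)
    (del : ℕ → Fin m → Fin (B + 1)) :
    ℕ → Matrix (Fin n ⊕ DelayNode m B) (Fin n ⊕ DelayNode m B) ℝ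
  | 0 => 1
  | t + 1 => Phat G P del (t + 1) * Mprod G P del t

/-- Top-left `n × n` block of `M(t)`. -/
def M1 (G : DGraph n m) (P : Matrix (Fin n) (Fin n) ℝ)
    (del : ℕ → Fin m → Fin (B + 1)) (t : ℕ) : Matrix (Fin n) (Fin n) ℝ :=
  fun i j => Mprod G P del t (Sum.inl i) (Sum.inl j)

/-- Bottom-left `b × n` block of `M(t)`. -/
def M2 (G : DGraph n m) (P : Matrix (Fin n) (Fin n) ℝ)
    (del : ℕ → Fin m → Fin (B + 1)) (t : ℕ) : Matrix (DelayNode m B) (Fin n) ℝ :=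
  fun d j => Mprod G P del t (Sum.inr d) (Sum.inl j)

/-- A node is occupied at time `t` if it is a compute node, or a delay node `d`
with `φ_d(t) = 1`. -/
def occupied (G : DGraph n m) (del : ℕ → Fin m → Fin (B + 1)) (t : ℕ) :
    (Fin n ⊕ DelayNode m B) → Prop
  | Sum.inl _ => True
  | Sum.inr d => phi G del t d = 1

/-- Maximum of the state over the occupied nodes at time `t`. -/
def occMax (G : DGraph n m) (P : Matrix (Fin n) (Fin n) ℝ)
    (del : ℕ → Fin m → Fin (B + 1)) (x0 : Fin n → ℝ) (t : ℕ) : ℝ :=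
  sSup {y : ℝ | ∃ v, occupied G del t v ∧ xhat G P del x0 t v = y}

/-- Minimum of the state over the occupied nodes at time `t`. -/
def occMin (G : DGraph n m) (P : Matrix (Fin n) (Fin n) ℝ)
    (del : ℕ → Fin m → Fin (B + 1)) (x0 : Fin n → ℝ) (t : ℕ) : ℝ :=
  sInf {y : ℝ | ∃ v, occupied G del t v ∧ xhat G P del x0 t v = y}

end RandomDelay

end

/-!
Every row of `P̂(t)` belonging to a node occupied at time `t` is a probability vector supported on
the nodes occupied at time `t - 1`. For a delay node it is the indicator of the node its message
comes from. For a compute node the received messages carry nonnegative weights of total at most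
one, since the messages from `j` to `i` share the weight `P i j`, and the node keeps the remaining
weight for its own value. Hence the convex hull of the occupied values shrinks at every single
iteration.
-/

section StdSimplex

variable {R ι : Type*} [Fintype ι]

lemma sum_smul_mem_of_mem_stdSimplex [Field R] [LinearOrder R] [IsStrictOrderedRing R]
    {E : Type*} [AddCommGroup E] [Module R E] {K : Set E} (hK : Convex R K) {w : ι → R}
    (hw : w ∈ stdSimplex R ι) {z : ι → E} (hz : ∀ i, w i ≠ 0 → z i ∈ K) :
    ∑ i, w i • z i ∈ K := by
  rw [← finsum_eq_sum_of_fintype]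
  exact hK.finsum_mem hw.1 (by rw [finsum_eq_sum_of_fintype, hw.2]) hz

lemma add_single_one_sub_sum_mem_stdSimplex [Ring R] [PartialOrder R] [IsOrderedAddMonoid R]
    [DecidableEq ι] {w : ι → R} (hw : 0 ≤ w) (hsum : ∑ i, w i ≤ 1) (k : ι) :
    w + Pi.single k (1 - ∑ i, w i) ∈ stdSimplex R ι := by
  refine ⟨add_nonneg hw (Pi.single_nonneg.2 (sub_nonneg.2 hsum)), ?_⟩
  simp [Finset.sum_add_distrib]

end StdSimplex

namespace RandomDelay

variable {n m B : ℕ} (G : DGraph n m) {P : Matrix (Fin n) (Fin n) ℝ}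
  (del : ℕ → Fin m → Fin (B + 1))

/-- The node preceding `d` on its chain. The subtraction is truncated, so the head of a chain is
its own predecessor. -/
def prev (d : DelayNode m B) : DelayNode m B :=
  ⟨(d.val.1, d.val.2.1, ⟨posIdx d - 1, (Nat.sub_le _ _).trans_lt d.val.2.2.isLt⟩),
    (Nat.sub_le _ _).trans d.property⟩

lemma eq_prev_iff {d d' : DelayNode m B} (hd : posIdx d ≠ 0) :
    d' = prev d ↔ d.val.1 = d'.val.1 ∧ d.val.2.1 = d'.val.2.1 ∧ posIdx d = posIdx d' + 1 := by
  have hpos : posIdx d' = posIdx d - 1 ↔ posIdx d = posIdx d' + 1 := by omega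
  rw [← hpos, eq_comm (a := d.val.1), eq_comm (a := d.val.2.1)]
  exact Subtype.ext_iff.trans (Prod.ext_iff.trans
    (and_congr_right' (Prod.ext_iff.trans (and_congr_right' Fin.ext_iff))))

lemma Cmat_of_posIdx_eq_zero {d : DelayNode m B} (hd : posIdx d = 0) : Cmat m B d = 0 := by
  ext d'
  simp [Cmat, hd]

lemma Cmat_of_posIdx_ne_zero {d : DelayNode m B} (hd : posIdx d ≠ 0) :
    Cmat m B d = Pi.single (prev d) 1 := by
  ext d'
  simp only [Cmat, Pi.single_apply, eq_prev_iff hd]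

lemma Rmat_of_posIdx_eq_zero (t : ℕ) {d : DelayNode m B} (hd : posIdx d = 0) :
    Rmat G del t d =
      if (del t (edgeOf d)).1 = lenIdx d + 1 then Pi.single (G.src (edgeOf d)) 1 else 0 := by
  ext j
  by_cases h : (del t (edgeOf d)).1 = lenIdx d + 1 <;>
    simp [Rmat, hd, h, Pi.single_apply, eq_comm]

lemma Rmat_of_posIdx_ne_zero (t : ℕ) {d : DelayNode m B} (hd : posIdx d ≠ 0) :
    Rmat G del t d = 0 := by
  ext j
  simp [Rmat, hd]

lemma phi_succ_apply (t : ℕ) (d : DelayNode m B) :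
    phi G del (t + 1) d = Rmat G del (t + 1) d ⬝ᵥ 1 + Cmat m B d ⬝ᵥ phi G del t :=
  rfl

lemma phi_succ_of_posIdx_eq_zero (t : ℕ) {d : DelayNode m B} (hd : posIdx d = 0) :
    phi G del (t + 1) d = if (del (t + 1) (edgeOf d)).1 = lenIdx d + 1 then 1 else 0 := by
  rw [phi_succ_apply, Cmat_of_posIdx_eq_zero hd, Rmat_of_posIdx_eq_zero G del _ hd]
  split_ifs <;> simp

lemma phi_succ_of_posIdx_ne_zero (t : ℕ) {d : DelayNode m B} (hd : posIdx d ≠ 0) :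
    phi G del (t + 1) d = phi G del t (prev d) := by
  rw [phi_succ_apply, Cmat_of_posIdx_ne_zero hd, Rmat_of_posIdx_ne_zero G del _ hd,
    zero_dotProduct, single_one_dotProduct, zero_add]

lemma phi_eq_zero_or_one (t : ℕ) (d : DelayNode m B) : phi G del t d = 0 ∨ phi G del t d = 1 := by
  induction t generalizing d with
  | zero => exact Or.inl rfl
  | succ t ih =>
    by_cases hd : posIdx d = 0
    · rw [phi_succ_of_posIdx_eq_zero G del t hd, ite_eq_right_iff, ite_eq_left_iff]
      tauto
    · rw [phi_succ_of_posIdx_ne_zero G del t hd]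
      exact ih (prev d)

lemma phi_nonneg (t : ℕ) (d : DelayNode m B) : 0 ≤ phi G del t d := by
  rcases phi_eq_zero_or_one G del t d with h | h <;> simp [h]

lemma Phat_inr (t : ℕ) (d : DelayNode m B) :
    Phat G P del t (Sum.inr d) = Sum.elim (Rmat G del t d) (Cmat m B d) := by
  ext (j | d') <;> rfl

variable {G del} (P) in
lemma exists_occupied_Phat_inr_eq_single {t : ℕ} {d : DelayNode m B}
    (hd : phi G del (t + 1) d = 1) :
    ∃ u, occupied G del t u ∧ Phat G P del (t + 1) (Sum.inr d) = Pi.single u 1 := by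
  by_cases hpos : posIdx d = 0
  · have hsent : (del (t + 1) (edgeOf d)).1 = lenIdx d + 1 := by
      simpa [phi_succ_of_posIdx_eq_zero G del t hpos] using hd
    refine ⟨Sum.inl (G.src (edgeOf d)), trivial, ?_⟩
    rw [Phat_inr, Rmat_of_posIdx_eq_zero G del _ hpos, if_pos hsent, Cmat_of_posIdx_eq_zero hpos,
      Sum.elim_single_zero]
  · refine ⟨Sum.inr (prev d), (phi_succ_of_posIdx_ne_zero G del t hpos).symm.trans hd, ?_⟩
    rw [Phat_inr, Rmat_of_posIdx_ne_zero G del _ hpos, Cmat_of_posIdx_ne_zero hpos,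
      Sum.elim_zero_single]

lemma Jmat_nonneg (i : Fin n) (d : DelayNode m B) : 0 ≤ Jmat G B i d := by
  unfold Jmat
  split_ifs <;> simp

lemma Lmat_nonneg (t : ℕ) (i j : Fin n) : 0 ≤ Lmat G del t i j := by
  unfold Lmat
  split_ifs <;> simp

lemma denom_nonneg (t : ℕ) (i j : Fin n) : 0 ≤ denom G del t i j :=
  add_nonneg (Nat.cast_nonneg _) (Lmat_nonneg G del t i j)

variable (P) in
/-- The weights with which compute node `i` averages the messages it receives at iteration `t`,
indexed by the node that delivers them: row `i` of `[P̄[L(t)], P̄[φ(t-1)]]`. -/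
noncomputable def receivedWeight (t : ℕ) (i : Fin n) : Fin n ⊕ DelayNode m B → ℝ :=
  Sum.elim (PLmat G P del t i) (PFmat G P del t i)

lemma Phat_inl (t : ℕ) (i : Fin n) :
    Phat G P del t (Sum.inl i) = receivedWeight G P del t i +
      Pi.single (Sum.inl i) (1 - ∑ u, receivedWeight G P del t i u) := by
  ext (j | d)
  · by_cases h : i = j
    · subst h
      simp only [Phat, P11, receivedWeight, fromBlocks_apply₁₁, Matrix.add_apply, Matrix.sub_apply,
        one_apply_eq, diagonal_apply_eq, Pi.add_apply, Sum.elim_inl, Pi.single_eq_same,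
        Fintype.sum_sum_type, Sum.elim_inr]
      ring
    · simp [Phat, P11, receivedWeight, h, Ne.symm h]
  · simp [Phat, receivedWeight]

lemma receivedWeight_nonneg (t : ℕ) {i : Fin n} (hP : ∀ j, 0 ≤ P i j) :
    0 ≤ receivedWeight G P del t i := by
  have hweight (j : Fin n) : 0 ≤ P i j / denom G del t i j :=
    div_nonneg (hP j) (denom_nonneg G del t i j)
  rintro (j | d)
  · exact mul_nonneg (Lmat_nonneg G del t i j) (hweight j)
  · exact mul_nonneg (mul_nonneg (Jmat_nonneg G i d) (phi_nonneg G del _ d)) (hweight _)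

variable {G del} in
lemma occupied_of_receivedWeight_ne_zero {t : ℕ} {i : Fin n} {u : Fin n ⊕ DelayNode m B}
    (hu : receivedWeight G P del (t + 1) i u ≠ 0) : occupied G del t u := by
  rcases u with j | d
  · trivial
  · refine (phi_eq_zero_or_one G del t d).resolve_left fun hphi => hu ?_
    simp [receivedWeight, PFmat, hphi]

variable (P) in
lemma sum_PFmat_of_src_eq (t : ℕ) (i j : Fin n) :
    ∑ d with G.src (edgeOf d) = j, PFmat G P del t i d =
      wgt G del t i j * (P i j / denom G del t i j) := by
  rw [wgt, Finset.card_filter, Nat.cast_sum, Finset.sum_mul, Finset.sum_filter]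
  refine Finset.sum_congr rfl fun d _ => ?_
  by_cases hj : G.src (edgeOf d) = j
  · rcases phi_eq_zero_or_one G del (t - 1) d with h | h <;> simp [PFmat, Jmat, hj, h]
  · simp [hj]

lemma sum_receivedWeight_le (t : ℕ) {i : Fin n} (hP : ∀ j, 0 ≤ P i j) :
    ∑ u, receivedWeight G P del t i u ≤ ∑ j, P i j :=
  calc ∑ u, receivedWeight G P del t i u
      = ∑ j, PLmat G P del t i j + ∑ j, ∑ d with G.src (edgeOf d) = j, PFmat G P del t i d := by
        rw [Finset.sum_fiberwise]
        exact Fintype.sum_sum_type _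
    _ = ∑ j, denom G del t i j * (P i j / denom G del t i j) := by
        simp only [← Finset.sum_add_distrib, sum_PFmat_of_src_eq, PLmat, denom, add_mul, add_comm]
    _ ≤ ∑ j, P i j := Finset.sum_le_sum fun j _ => by
        rw [mul_div_left_comm]
        exact mul_le_of_le_one_right (hP j) (div_self_le_one _)

variable {G del} in
lemma Phat_mem_stdSimplex (hP : ∀ i j, 0 ≤ P i j) (hsum : ∀ i, ∑ j, P i j ≤ 1) {t : ℕ}
    {v : Fin n ⊕ DelayNode m B} (hv : occupied G del (t + 1) v) :
    Phat G P del (t + 1) v ∈ stdSimplex ℝ (Fin n ⊕ DelayNode m B) := by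
  rcases v with i | d
  · rw [Phat_inl]
    exact add_single_one_sub_sum_mem_stdSimplex (receivedWeight_nonneg G del _ (hP i))
      ((sum_receivedWeight_le G del _ (hP i)).trans (hsum i)) _
  · obtain ⟨u, -, hrow⟩ := exists_occupied_Phat_inr_eq_single P hv
    rw [hrow]
    exact single_mem_stdSimplex ℝ u

variable {G del} in
lemma occupied_of_Phat_ne_zero {t : ℕ} {v u : Fin n ⊕ DelayNode m B}
    (hv : occupied G del (t + 1) v) (hvu : Phat G P del (t + 1) v u ≠ 0) :
    occupied G del t u := by
  rcases v with i | d
  · rcases u with j | d'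
    · trivial
    · have hweight : receivedWeight G P del (t + 1) i (Sum.inr d') ≠ 0 := by
        simpa [Phat_inl] using hvu
      exact occupied_of_receivedWeight_ne_zero hweight
  · obtain ⟨p, hp, hrow⟩ := exists_occupied_Phat_inr_eq_single P hv
    have hup : u = p := by
      by_contra h
      exact hvu (by rw [hrow, Pi.single_eq_of_ne h])
    exact hup ▸ hp

variable (P) in
/-- The values of the state at the nodes occupied at time `t`, whose supremum and infimum are
`occMax` and `occMin`. -/
def occupiedValues (x0 : Fin n → ℝ) (t : ℕ) : Set ℝ :=
  xhat G P del x0 t '' {v | occupied G del t v}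

lemma occupiedValues_finite (x0 : Fin n → ℝ) (t : ℕ) : (occupiedValues G P del x0 t).Finite :=
  (Set.toFinite _).image _

lemma occupiedValues_nonempty (hn : 0 < n) (x0 : Fin n → ℝ) (t : ℕ) :
    (occupiedValues G P del x0 t).Nonempty :=
  ⟨_, Sum.inl ⟨0, hn⟩, trivial, rfl⟩

lemma convexHull_occupiedValues_antitone (hP : ∀ i j, 0 ≤ P i j) (hsum : ∀ i, ∑ j, P i j ≤ 1)
    (x0 : Fin n → ℝ) : Antitone fun t => convexHull ℝ (occupiedValues G P del x0 t) := by
  refine antitone_nat_of_succ_le fun t => convexHull_min ?_ (convex_convexHull ℝ _)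
  rintro _ ⟨v, hv, rfl⟩
  exact sum_smul_mem_of_mem_stdSimplex (convex_convexHull ℝ _) (Phat_mem_stdSimplex hP hsum hv)
    fun u hu => subset_convexHull ℝ _ ⟨u, occupied_of_Phat_ne_zero hv hu, rfl⟩

lemma occupiedValues_subset_of_convex (hP : ∀ i j, 0 ≤ P i j) (hsum : ∀ i, ∑ j, P i j ≤ 1)
    (x0 : Fin n → ℝ) {s t : ℕ} (hst : s ≤ t) {K : Set ℝ} (hK : Convex ℝ K)
    (hs : occupiedValues G P del x0 s ⊆ K) : occupiedValues G P del x0 t ⊆ K :=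
  (subset_convexHull ℝ _).trans <|
    (convexHull_occupiedValues_antitone G del hP hsum x0 hst).trans (convexHull_min hs hK)

end RandomDelay

open RandomDelay in
theorem random_delay_nonexpansive_general {n m B : ℕ} (hn : 0 < n) (G : DGraph n m)
    {P : Matrix (Fin n) (Fin n) ℝ} (hP : ∀ i j, 0 ≤ P i j) (hsum : ∀ i, ∑ j, P i j ≤ 1)
    (del : ℕ → Fin m → Fin (B + 1)) (x0 : Fin n → ℝ) :
    Antitone (occMax G P del x0) ∧ Monotone (occMin G P del x0) := by
  constructor <;> intro s t hst
  · exact csSup_le (occupiedValues_nonempty G del hn x0 t) <|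
      occupiedValues_subset_of_convex G del hP hsum x0 hst (convex_Iic _) fun _ =>
        le_csSup (occupiedValues_finite G del x0 s).bddAbove
  · exact le_csInf (occupiedValues_nonempty G del hn x0 t) <|
      occupiedValues_subset_of_convex G del hP hsum x0 hst (convex_Ici _) fun _ =>
        csInf_le (occupiedValues_finite G del x0 s).bddBelow

open RandomDelay in
/-- **Non-expansiveness over `2B+1` iterations.**  For every realization of the
delays, the maximum over occupied coordinates does not increase, and the minimum
over occupied coordinates does not decrease, from time `t` to time `t + (2B+1)`. -/
theorem random_delay_nonexpansive
    {n m B : ℕ} (hn : 0 < n) (hB : 1 ≤ B)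
    (G : DGraph n m) (P : Matrix (Fin n) (Fin n) ℝ) (hV : G.Valid P)
    (del : ℕ → Fin m → Fin (B + 1)) (x0 : Fin n → ℝ) (t : ℕ) :
    occMax G P del x0 (t + (2 * B + 1)) ≤ occMax G P del x0 t ∧
    occMin G P del x0 t ≤ occMin G P del x0 (t + (2 * B + 1)) :=
  (random_delay_nonexpansive_general hn G hV.nonneg (fun i => (hV.rowSum i).le) del x0).imp
    (fun hmax => hmax (Nat.le_add_right _ _)) (fun hmin => hmin (Nat.le_add_right _ _))
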